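/- arXiv:2204.03299 — 4 statements merged into one kernel-verified Lean document; each statement's English description precedes it below -/
import Mathlib

section
/- (Theorem 1, core of convergence result) The function Φ is a generalized ordinal potential for the opinion game: for every opinion profile x ∈ Θ^n, every agent i, and every opinion y ∈ Θ, if c_i(x) − c_i(y, x_{−i}) > 0 then Φ(x) − Φ(y, x_{−i}) > 0, where (y, x_{−i}) denotes the profile obtained from x when agent i switches from x_i to y. -/
open Finset

/-- The recommendation function with threshold λ = 1/2. -/
noncomputable def sRec (x : ℝ) : ℝ :=
  if x < -(1/2 : ℝ) then -1 else if (1/2 : ℝ) < x then 1 else 0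

/-- Membership in the opinion grid Θ = {-1, -1+δ, …, 1-δ, 1}. -/
def inGrid (δ x : ℝ) : Prop := |x| ≤ 1 ∧ ∃ k : ℤ, x = k * δ

/-- Cost to agent `i` of holding opinion `y` when the current profile is `x`.
Non-edges are modelled by weight `0`. -/
noncomputable def cost {n : ℕ} (b : ℝ) (w : Fin n → Fin n → ℝ) (i : Fin n)
    (y : ℝ) (x : Fin n → ℝ) : ℝ :=
  b * (y - sRec (x i)) ^ 2 + ∑ j, w i j * (y - x j) ^ 2

/-- The potential Φ(x) = Σ_i b(x_i − s(x_i))² + Σ_{(i,j)∈E} w_{ij}(x_i − x_j)²;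
the sum over undirected edges equals half of the sum over ordered pairs. -/
noncomputable def pot {n : ℕ} (b : ℝ) (w : Fin n → Fin n → ℝ) (x : Fin n → ℝ) : ℝ :=
  (∑ i, b * (x i - sRec (x i)) ^ 2) + (1/2) * ∑ i, ∑ j, w i j * (x i - x j) ^ 2

/-!
Moving agent `i` from `x i` to `y` changes the disagreement terms of `Φ` exactly as it changes those
of the cost of `i`, up to a nonnegative loop term at `i`. The recommendation terms differ: the cost
keeps the recommendation `s (x i)`, whereas `Φ` re-evaluates it at `y`. Since `s y` is a point of
`{-1, 0, 1}` nearest to `y`, re-evaluating can only lower `Φ` further.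
-/

theorem sRec_mem (x : ℝ) : sRec x ∈ ({-1, 0, 1} : Set ℝ) := by
  unfold sRec
  split_ifs <;> simp

theorem sq_sub_sRec_le_of_mem {t : ℝ} (ht : t ∈ ({-1, 0, 1} : Set ℝ)) (y : ℝ) :
    (y - sRec y) ^ 2 ≤ (y - t) ^ 2 := by
  unfold sRec
  rcases ht with rfl | rfl | rfl <;> split_ifs <;> nlinarith

section Sums

variable {ι : Type*} [Fintype ι]

theorem sum_sub_sum_update [DecidableEq ι] {α M : Type*} [AddCommGroup M] (f : ι → α → M)
    (x : ι → α) (i : ι) (y : α) :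
    ∑ a, f a (x a) - ∑ a, f a (Function.update x i y a) = f i (x i) - f i y := by
  rw [← sum_sub_distrib, Fintype.sum_eq_single i fun a ha ↦ by simp [ha], Function.update_self]

theorem sum_sum_eq_of_symm_of_eq_zero {M : Type*} [AddCommGroup M] {d : ι → ι → M} {i : ι}
    (hsymm : ∀ a j, d a j = d j a) (hzero : ∀ a, a ≠ i → ∀ j, j ≠ i → d a j = 0) :
    ∑ a, ∑ j, d a j = 2 • ∑ j, d i j - d i i := by
  classical
  have row_of_ne : ∀ a ∈ univ.erase i, ∑ j, d a j = d i a := fun a ha ↦ by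
    rw [Fintype.sum_eq_single i (hzero a (ne_of_mem_erase ha)), hsymm]
  calc ∑ a, ∑ j, d a j
      = ∑ j, d i j + ∑ a ∈ univ.erase i, d i a := by
        rw [← add_sum_erase univ _ (mem_univ i), sum_congr rfl row_of_ne]
    _ = 2 • ∑ j, d i j - d i i := by
        rw [sum_erase_eq_sub (mem_univ i), two_nsmul, add_sub_assoc]

theorem sum_sum_mul_sq_sub_update [DecidableEq ι] {R : Type*} [CommRing R] {w : ι → ι → R}
    (hsymm : ∀ a j, w a j = w j a) (x : ι → R) (i : ι) (y : R) :
    ∑ a, ∑ j, w a j * (x a - x j) ^ 2 -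
        ∑ a, ∑ j, w a j * (Function.update x i y a - Function.update x i y j) ^ 2 =
      2 * (∑ j, w i j * (x i - x j) ^ 2 - ∑ j, w i j * (y - x j) ^ 2 +
        w i i * (y - x i) ^ 2) := by
  let d (a j : ι) : R := w a j * (x a - x j) ^ 2 -
    w a j * (Function.update x i y a - Function.update x i y j) ^ 2
  have d_symm (a j : ι) : d a j = d j a := by
    simp only [d, hsymm a j]
    ring
  have d_eq_zero (a : ι) (ha : a ≠ i) (j : ι) (hj : j ≠ i) : d a j = 0 := by
    simp [d, ha, hj]
  have d_self : d i i = 0 := by simp [d]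
  have d_row (j : ι) : d i j = w i j * (x i - x j) ^ 2 - w i j * (y - x j) ^ 2 +
      if j = i then w i i * (y - x i) ^ 2 else 0 := by
    by_cases hj : j = i
    · subst hj
      simp [d]
    · simp [d, hj]
  calc _ = ∑ a, ∑ j, d a j := by simp only [d, sum_sub_distrib]
    _ = 2 * ∑ j, d i j := by
      rw [sum_sum_eq_of_symm_of_eq_zero d_symm d_eq_zero, d_self, sub_zero, two_nsmul, two_mul]
    _ = _ := by simp only [d_row, sum_add_distrib, sum_sub_distrib, sum_ite_eq', mem_univ, if_true]

end Sums

section Potential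

variable {n : ℕ} {b : ℝ} {w : Fin n → Fin n → ℝ}

theorem pot_sub_pot_update (hsymm : ∀ i j, w i j = w j i) (x : Fin n → ℝ) (i : Fin n) (y : ℝ) :
    pot b w x - pot b w (Function.update x i y) =
      cost b w i (x i) x - cost b w i y x +
        b * ((y - sRec (x i)) ^ 2 - (y - sRec y) ^ 2) + w i i * (y - x i) ^ 2 := by
  have recommendation := sum_sub_sum_update (fun _ z ↦ b * (z - sRec z) ^ 2) x i y
  have disagreement := sum_sum_mul_sq_sub_update hsymm x i y
  unfold pot cost
  linear_combination recommendation + 1 / 2 * disagreement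

theorem generalized_ordinal_potential_general (hb : 0 ≤ b) (hsymm : ∀ i j, w i j = w j i)
    (x : Fin n → ℝ) (i : Fin n) (hloop : 0 ≤ w i i) (y : ℝ) :
    cost b w i (x i) x - cost b w i y x ≤ pot b w x - pot b w (Function.update x i y) := by
  have recommendation_gain : 0 ≤ b * ((y - sRec (x i)) ^ 2 - (y - sRec y) ^ 2) :=
    mul_nonneg hb (sub_nonneg.2 (sq_sub_sRec_le_of_mem (sRec_mem (x i)) y))
  have loop_gain : 0 ≤ w i i * (y - x i) ^ 2 := mul_nonneg hloop (sq_nonneg _)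
  rw [pot_sub_pot_update hsymm, add_assoc]
  exact le_add_of_nonneg_right (add_nonneg recommendation_gain loop_gain)

end Potential

/-- Φ is a generalized ordinal potential for the opinion game. -/
theorem generalized_ordinal_potential
    {n : ℕ} (hn : 2 ≤ n) (m : ℕ) (hm : 2 ≤ m) (δ : ℝ) (hδ : δ = 1 / m)
    (b : ℝ) (hb : 0 < b) (w : Fin n → Fin n → ℝ)
    (hsym : ∀ i j, w i j = w j i) (hdiag : ∀ i, w i i = 0)
    (hw : ∀ i j, 0 ≤ w i j)
    (x : Fin n → ℝ) (hx : ∀ i, inGrid δ (x i))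
    (i : Fin n) (y : ℝ) (hy : inGrid δ y)
    (himp : cost b w i (x i) x - cost b w i y x > 0) :
    pot b w x - pot b w (Function.update x i y) > 0 :=
  himp.trans_le (generalized_ordinal_potential_general hb.le hsym x i (hw i i) y)
end

section
/- (Theorem 1, convergence) In the opinion game, every sequence of asynchronous improvement steps is finite; consequently, starting from any initial profile, any maximal sequence of asynchronous improvement steps terminates at a profile that is a Nash equilibrium of the opinion game. -/
open Finset

/-- An asynchronous improvement step: a single agent `i` switches to an opinion
`y ∈ Θ` that strictly decreases her cost. -/
def ImprStep {n : ℕ} (δ b : ℝ) (w : Fin n → Fin n → ℝ) (x x' : Fin n → ℝ) : Prop :=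
  ∃ i y, inGrid δ y ∧ cost b w i y x < cost b w i (x i) x ∧ x' = Function.update x i y

/-- A profile is a Nash equilibrium (stable) if every agent's opinion minimizes
her cost over Θ. -/
def NashEq {n : ℕ} (δ b : ℝ) (w : Fin n → Fin n → ℝ) (x : Fin n → ℝ) : Prop :=
  ∀ i y, inGrid δ y → cost b w i (x i) x ≤ cost b w i y x

/-!
The recommendation `sRec x` is a subgradient at `x` of the convex function `max 0 (|x| - 1/2)`.
Replacing the linear term `sRec x * y` of an agent's cost by this function gives a potential that
depends only on the profile, and convexity shows that a move lowers the potential at least as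
much as it lowers the mover's cost. Each agent only ever holds her initial opinion or one of the
finitely many grid points, so a strictly decreasing potential rules out infinite improvement
sequences.
-/

/-- The convex primitive of the recommendation function, replacing the linear recommendation term
of the cost in `potential`. -/
noncomputable def recPrimitive (x : ℝ) : ℝ :=
  max 0 (|x| - 1 / 2)

lemma sRec_mul_self_sub (x : ℝ) : sRec x * x - |sRec x| / 2 = recPrimitive x := by
  unfold sRec recPrimitive
  split_ifs with hneg hpos
  · rw [abs_of_neg (by linarith : x < 0), max_eq_right (by linarith)]
    norm_num
  · rw [abs_of_pos (by linarith : 0 < x), max_eq_right (by linarith)]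
    norm_num
  · have hx : |x| ≤ 1 / 2 := abs_le.2 ⟨by linarith, by linarith⟩
    rw [max_eq_left (by linarith)]
    norm_num

lemma sRec_mul_sub_le (x y : ℝ) : sRec x * (y - x) ≤ recPrimitive y - recPrimitive x := by
  have hy : sRec x * y - |sRec x| / 2 ≤ recPrimitive y := by
    have h_nonneg : 0 ≤ recPrimitive y := le_max_left _ _
    have h_abs : |y| - 1 / 2 ≤ recPrimitive y := le_max_right _ _
    have hle : y ≤ |y| := le_abs_self y
    have hneg : -y ≤ |y| := neg_le_abs y
    unfold sRec
    split_ifs <;> norm_num <;> linarith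
  linarith [sRec_mul_self_sub x]

lemma sum_sum_eq_of_symm {ι M : Type*} [Fintype ι] [DecidableEq ι] [AddCommMonoid M]
    {F : ι → ι → M} (hF : ∀ i j, F i j = F j i) (i : ι) :
    ∑ k, ∑ l, F k l =
      F i i + 2 • ∑ j ∈ univ.erase i, F i j + ∑ k ∈ univ.erase i, ∑ l ∈ univ.erase i, F k l := by
  have hsplit (f : ι → M) : ∑ k, f k = f i + ∑ k ∈ univ.erase i, f k :=
    (add_sum_erase univ f (mem_univ i)).symm
  simp_rw [hsplit, sum_add_distrib, hF _ i]
  abel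

lemma sum_update_sub {ι α M : Type*} [Fintype ι] [DecidableEq ι] [AddCommGroup M]
    (f : α → M) (x : ι → α) (i : ι) (y : α) :
    ∑ k, f (Function.update x i y k) - ∑ k, f (x k) = f y - f (x i) := by
  rw [← sum_sub_distrib, Fintype.sum_eq_single i fun k hk ↦ by
    rw [Function.update_of_ne hk, sub_self], Function.update_self]

section Disagreement

variable {ι R : Type*} [Fintype ι] [CommRing R]

/-- The weighted quadratic disagreement of a profile, summed over ordered pairs, so that each edge
counts twice. -/
def disagreement (w : ι → ι → R) (x : ι → R) : R :=
  ∑ i, ∑ j, w i j * (x i - x j) ^ 2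

lemma disagreement_update_sub [DecidableEq ι] {w : ι → ι → R} (hsym : ∀ i j, w i j = w j i)
    (x : ι → R) (i : ι) (y : R) :
    disagreement w (Function.update x i y) - disagreement w x =
      2 * (∑ j, w i j * (y - x j) ^ 2 - ∑ j, w i j * (x i - x j) ^ 2 -
        w i i * (y - x i) ^ 2) := by
  have hF (z : ι → R) (k l : ι) : w k l * (z k - z l) ^ 2 = w l k * (z l - z k) ^ 2 := by
    rw [hsym k l, sub_sq_comm]
  have hupd {k : ι} (hk : k ∈ univ.erase i) : Function.update x i y k = x k :=
    Function.update_of_ne (ne_of_mem_erase hk) _ _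
  have hrow : ∑ j ∈ univ.erase i, w i j * (y - Function.update x i y j) ^ 2 =
      ∑ j ∈ univ.erase i, w i j * (y - x j) ^ 2 :=
    sum_congr rfl fun j hj ↦ by rw [hupd hj]
  have hrest : ∑ k ∈ univ.erase i, ∑ l ∈ univ.erase i,
        w k l * (Function.update x i y k - Function.update x i y l) ^ 2 =
      ∑ k ∈ univ.erase i, ∑ l ∈ univ.erase i, w k l * (x k - x l) ^ 2 :=
    sum_congr rfl fun k hk ↦ sum_congr rfl fun l hl ↦ by rw [hupd hk, hupd hl]
  rw [disagreement, disagreement, sum_sum_eq_of_symm (hF _) i, sum_sum_eq_of_symm (hF x) i, hrest,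
    Function.update_self, hrow, ← add_sum_erase univ (fun j ↦ w i j * (y - x j) ^ 2) (mem_univ i),
    ← add_sum_erase univ (fun j ↦ w i j * (x i - x j) ^ 2) (mem_univ i)]
  ring

end Disagreement

section OpinionGame

variable {n : ℕ} {δ b : ℝ} {w : Fin n → Fin n → ℝ}

/-- The potential of the opinion game: it falls at every improvement step by at least the mover's
gain. The factor `1 / 2` makes up for `disagreement` counting every edge twice. -/
noncomputable def potential (b : ℝ) (w : Fin n → Fin n → ℝ) (x : Fin n → ℝ) : ℝ :=
  ∑ i, b * (x i ^ 2 - 2 * recPrimitive (x i)) + 1 / 2 * disagreement w x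

lemma potential_update_sub_le (hb : 0 ≤ b) (hsym : ∀ i j, w i j = w j i)
    {i : Fin n} (hdiag : 0 ≤ w i i) (x : Fin n → ℝ) (y : ℝ) :
    potential b w (Function.update x i y) - potential b w x ≤
      cost b w i y x - cost b w i (x i) x := by
  have hself := sum_update_sub (fun z ↦ b * (z ^ 2 - 2 * recPrimitive z)) x i y
  have hpair := disagreement_update_sub hsym x i y
  have hloop : 0 ≤ w i i * (y - x i) ^ 2 := by positivity
  have hrec := mul_le_mul_of_nonneg_left (sRec_mul_sub_le (x i) y) hb
  unfold potential cost
  linarith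

lemma ImprStep.potential_lt (hb : 0 ≤ b) (hsym : ∀ i j, w i j = w j i)
    (hdiag : ∀ i, 0 ≤ w i i) {x x' : Fin n → ℝ} (h : ImprStep δ b w x x') :
    potential b w x' < potential b w x := by
  obtain ⟨i, y, -, hcost, rfl⟩ := h
  linarith [potential_update_sub_le hb hsym (hdiag i) x y]

lemma finite_setOf_inGrid (δ : ℝ) : {x | inGrid δ x}.Finite := by
  have hmultiples : {p : AddSubgroup.zmultiples δ | (p : ℝ) ∈ Metric.closedBall 0 1}.Finite := by
    simpa using (AddSubgroup.tendsto_zmultiples_subtype_cofinite δ).eventually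
      (isCompact_closedBall (0 : ℝ) 1).compl_mem_cocompact
  refine (hmultiples.image Subtype.val).subset ?_
  rintro x ⟨hx, k, rfl⟩
  exact ⟨⟨k * δ, k, by simp⟩, by simpa using hx, rfl⟩

lemma ImprStep.eq_or_inGrid {x x' : Fin n → ℝ} (h : ImprStep δ b w x x') (j : Fin n) :
    x' j = x j ∨ inGrid δ (x' j) := by
  obtain ⟨i, y, hy, -, rfl⟩ := h
  obtain rfl | hj := eq_or_ne j i
  · exact .inr (by rwa [Function.update_self])
  · exact .inl (Function.update_of_ne hj _ _)

lemma finite_range_of_imprStep {seq : ℕ → Fin n → ℝ}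
    (h : ∀ t, ImprStep δ b w (seq t) (seq (t + 1))) : (Set.range seq).Finite := by
  have hmem (t : ℕ) (i : Fin n) : seq t i ∈ insert (seq 0 i) {x | inGrid δ x} := by
    induction t with
    | zero => exact Set.mem_insert _ _
    | succ t ih =>
      obtain heq | hgrid := (h t).eq_or_inGrid i
      · rwa [heq]
      · exact Set.mem_insert_of_mem _ hgrid
  refine (Set.Finite.pi' fun i ↦ (finite_setOf_inGrid δ).insert (seq 0 i)).subset ?_
  rintro _ ⟨t, rfl⟩
  exact hmem t

lemma nashEq_iff_not_exists_imprStep {x : Fin n → ℝ} :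
    NashEq δ b w x ↔ ¬ ∃ x', ImprStep δ b w x x' := by
  constructor
  · rintro hx ⟨_, i, y, hy, hcost, rfl⟩
    exact (hx i y hy).not_gt hcost
  · intro h i y hy
    exact not_lt.1 fun hcost ↦ h ⟨_, i, y, hy, hcost, rfl⟩

theorem async_dynamics_converges_general (hb : 0 ≤ b) (hsym : ∀ i j, w i j = w j i)
    (hdiag : ∀ i, 0 ≤ w i i) :
    (∀ seq : ℕ → Fin n → ℝ, ¬ ∀ t, ImprStep δ b w (seq t) (seq (t + 1))) ∧
    ∀ x : Fin n → ℝ, (¬ ∃ x', ImprStep δ b w x x') → NashEq δ b w x := by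
  refine ⟨fun seq hstep ↦ ?_, fun x ↦ nashEq_iff_not_exists_imprStep.2⟩
  have hanti : StrictAnti (potential b w ∘ seq) :=
    strictAnti_nat_of_succ_lt fun t ↦ (hstep t).potential_lt hb hsym hdiag
  exact Set.infinite_range_of_injective hanti.injective.of_comp (finite_range_of_imprStep hstep)

end OpinionGame

/-- Every sequence of asynchronous improvement steps is finite, and any profile
from which no improvement step is possible is a Nash equilibrium; hence maximal
improvement sequences terminate at a Nash equilibrium. -/
theorem async_dynamics_converges
    {n : ℕ} (hn : 2 ≤ n) (m : ℕ) (hm : 2 ≤ m) (δ : ℝ) (hδ : δ = 1 / m)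
    (b : ℝ) (hb : 0 < b) (w : Fin n → Fin n → ℝ)
    (hsym : ∀ i j, w i j = w j i) (hdiag : ∀ i, w i i = 0)
    (hw : ∀ i j, 0 ≤ w i j) :
    (∀ seq : ℕ → (Fin n → ℝ), (∀ i, inGrid δ (seq 0 i)) →
      ¬ (∀ t, ImprStep δ b w (seq t) (seq (t + 1)))) ∧
    (∀ x : Fin n → ℝ, (∀ i, inGrid δ (x i)) →
      (¬ ∃ x', ImprStep δ b w x x') → NashEq δ b w x) := by
  have h := async_dynamics_converges_general (δ := δ) hb.le hsym fun i ↦ hw i i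
  exact ⟨fun seq _ ↦ h.1 seq, fun x _ ↦ h.2 x⟩
end

section
/- (Existence of stable profiles) In the opinion game, a consensus on an extreme opinion is always stable: the profile in which every agent holds opinion 1 is a Nash equilibrium, and likewise the profile in which every agent holds opinion −1 is a Nash equilibrium. In particular, the opinion game always possesses a Nash equilibrium. -/
open Finset

/-! A consensus on a fixed point `c` of the recommendation function costs every agent `0`: she
agrees with the recommendation and with all her neighbours. Costs are never negative, so `c` is
optimal. Both `1` and `-1` are such fixed points. -/

lemma sRec_one : sRec 1 = 1 := by norm_num [sRec]

lemma sRec_neg_one : sRec (-1) = -1 := by norm_num [sRec]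

lemma inGrid_one_div_one {m : ℕ} (hm : m ≠ 0) : inGrid (1 / m) 1 :=
  ⟨abs_one.le, m, by rw [Int.cast_natCast, mul_one_div_cancel (Nat.cast_ne_zero.mpr hm)]⟩

section Cost

variable {n : ℕ} {b : ℝ} {w : Fin n → Fin n → ℝ}

lemma cost_nonneg {i : Fin n} (hb : 0 ≤ b) (hw : ∀ j, 0 ≤ w i j) (y : ℝ) (x : Fin n → ℝ) :
    0 ≤ cost b w i y x :=
  add_nonneg (mul_nonneg hb (sq_nonneg _))
    (sum_nonneg fun j _ => mul_nonneg (hw j) (sq_nonneg _))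

lemma cost_const_eq_zero {c : ℝ} (hc : sRec c = c) (b : ℝ) (w : Fin n → Fin n → ℝ) (i : Fin n) :
    cost b w i c (fun _ => c) = 0 := by
  simp [cost, hc]

lemma nashEq_const_of_sRec_eq {c : ℝ} (hc : sRec c = c) (δ : ℝ) (hb : 0 ≤ b)
    (hw : ∀ i j, 0 ≤ w i j) : NashEq δ b w (fun _ => c) := fun i y _ =>
  (cost_const_eq_zero hc b w i).trans_le (cost_nonneg hb (hw i) y _)

end Cost

theorem consensus_on_extremes_stable_general
    {n m : ℕ} (hm : m ≠ 0) {δ : ℝ} (hδ : δ = 1 / m) {b : ℝ} (hb : 0 ≤ b)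
    {w : Fin n → Fin n → ℝ} (hw : ∀ i j, 0 ≤ w i j) :
    NashEq δ b w (fun _ => (1 : ℝ)) ∧ NashEq δ b w (fun _ => (-1 : ℝ)) ∧
    ∃ x : Fin n → ℝ, (∀ i, inGrid δ (x i)) ∧ NashEq δ b w x := by
  have stable_one : NashEq δ b w (fun _ => (1 : ℝ)) := nashEq_const_of_sRec_eq sRec_one δ hb hw
  have stable_neg_one : NashEq δ b w (fun _ => (-1 : ℝ)) :=
    nashEq_const_of_sRec_eq sRec_neg_one δ hb hw
  have one_mem : inGrid δ 1 := hδ ▸ inGrid_one_div_one hm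
  exact ⟨stable_one, stable_neg_one, fun _ => 1, fun _ => one_mem, stable_one⟩

/-- Consensus on the extreme opinions 1 and −1 is always stable; in particular
the opinion game always possesses a Nash equilibrium (with a profile in Θⁿ). -/
theorem consensus_on_extremes_stable
    {n : ℕ} (hn : 2 ≤ n) (m : ℕ) (hm : 2 ≤ m) (δ : ℝ) (hδ : δ = 1 / m)
    (b : ℝ) (hb : 0 < b) (w : Fin n → Fin n → ℝ)
    (hsym : ∀ i j, w i j = w j i) (hdiag : ∀ i, w i i = 0)
    (hw : ∀ i j, 0 ≤ w i j) :
    NashEq δ b w (fun _ => (1 : ℝ)) ∧ NashEq δ b w (fun _ => (-1 : ℝ)) ∧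
    ∃ x : Fin n → ℝ, (∀ i, inGrid δ (x i)) ∧ NashEq δ b w x :=
  consensus_on_extremes_stable_general (by lia) hδ hb.le hw
end

section
/- (Theorem: exponential-time instances) For every integer n ≥ 1 there exist an undirected weighted graph G = (V,E,w) with |V| = 6n+1 vertices and positive edge weights, a social-media influence strength b > 0, an initial opinion profile x⁰ ∈ Θ^V with discretization factor δ = 1/2, and a sequence of opinion profiles x⁰, x¹, …, x^T with T ≥ 2^{n−1} in which each x^{t+1} is obtained from x^t by an asynchronous improvement step of the corresponding opinion game. In particular, the opinion dynamics with asynchronous updates may take a number of steps exponential in the number of agents before converging. -/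
open Finset

/-!
The steps used are *flips*: opinions are `±1/2`, where the recommendation is `0`, and an agent who
negates her opinion `x i` changes her cost by `4 * (x i * ∑ j, w i j * x j)`. So an agent may flip
against the field exerted by her neighbours, whatever the influence strength is.

The network is a binary counter made of levels whose weights decrease by a factor `5`. The input
agent and the trigger of a level drive the next level up as long as both are at `1/2`, and down
otherwise. When a level is driven in either direction, its first flip (of the input agent on the
way up, of the trigger on the way down) makes the two agree at `1/2`, which drives the next level
up; the flip of the other one drives the next level down again; finally the memory flips, which
prepares the opposite order for the next time. Hence each level moves twice as often as the
previous one, and `n` levels make `T` flips with `T (n + 1) = 2 * T n + 3`.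
-/

namespace OpinionGame

open Matrix SetRel

section Chain

variable {α β : Type*} {r : SetRel α α} {s : SetRel β β} {x y z : α} {m n : ℕ}

/-- `y` is reached from `x` by exactly `n` steps of the relation `r`. -/
def ReachesIn (r : SetRel α α) (n : ℕ) (x y : α) : Prop :=
  ∃ p : RelSeries r, p.length = n ∧ p.head = x ∧ p.last = y

lemma ReachesIn.refl (r : SetRel α α) (x : α) : ReachesIn r 0 x x :=
  ⟨.singleton r x, rfl, rfl, rfl⟩

lemma ReachesIn.single (h : x ~[r] y) : ReachesIn r 1 x y :=
  ⟨(RelSeries.singleton r x).snoc y h, rfl, RelSeries.head_snoc .., RelSeries.last_snoc ..⟩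

lemma ReachesIn.trans (hxy : ReachesIn r m x y) (hyz : ReachesIn r n y z) :
    ReachesIn r (m + n) x z := by
  obtain ⟨p, rfl, rfl, rfl⟩ := hxy
  obtain ⟨q, rfl, hpq, rfl⟩ := hyz
  exact ⟨p.smash q hpq.symm, rfl, by simp, by simp⟩

lemma ReachesIn.map (f : α → β) (hf : ∀ ⦃x y⦄, x ~[r] y → f x ~[s] f y)
    (h : ReachesIn r n x y) : ReachesIn s n (f x) (f y) := by
  obtain ⟨p, rfl, rfl, rfl⟩ := h
  exact ⟨p.map ⟨f, @hf⟩, rfl, rfl, rfl⟩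

lemma ReachesIn.exists_seq (h : ReachesIn r n x y) :
    ∃ f : ℕ → α, f 0 = x ∧ ∀ t < n, f t ~[r] f (t + 1) := by
  obtain ⟨p, rfl, rfl, rfl⟩ := h
  refine ⟨fun t => if ht : t < p.length + 1 then p ⟨t, ht⟩ else p.last, rfl, fun t ht => ?_⟩
  simpa [ht, ht.trans_le] using p.step ⟨t, ht⟩

end Chain

section Weights

variable {U V : Type*}

/-- The admissible weight matrices of an undirected graph without self-loops; an entry `0`
stands for a missing edge. -/
structure IsWeight (W : Matrix V V ℝ) : Prop where
  isSymm : W.IsSymm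
  diag_eq_zero (i : V) : W i i = 0
  nonneg (i j : V) : 0 ≤ W i j

lemma isWeight_zero : IsWeight (0 : Matrix V V ℝ) :=
  ⟨isSymm_zero, fun _ => rfl, fun _ _ => le_rfl⟩

lemma IsWeight.submatrix {W : Matrix V V ℝ} (hW : IsWeight W) (f : U → V) :
    IsWeight (W.submatrix f f) :=
  ⟨hW.isSymm.submatrix f, fun i => hW.diag_eq_zero (f i), fun i j => hW.nonneg (f i) (f j)⟩

/-- The network consisting of `A` and `W`, in which `i : U` and `j : V` are joined with
weight `v i * d j`. The rank-one coupling makes each side see the other only through a scalar. -/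
def couple (A : Matrix U U ℝ) (v : U → ℝ) (d : V → ℝ) (W : Matrix V V ℝ) :
    Matrix (U ⊕ V) (U ⊕ V) ℝ :=
  fromBlocks A (vecMulVec v d) (vecMulVec d v) W

variable {A : Matrix U U ℝ} {v : U → ℝ} {d : V → ℝ} {W : Matrix V V ℝ}

lemma IsWeight.couple (hA : IsWeight A) (hv : 0 ≤ v) (hd : 0 ≤ d) (hW : IsWeight W) :
    IsWeight (couple A v d W) where
  isSymm := hA.isSymm.fromBlocks (transpose_vecMulVec v d) hW.isSymm
  diag_eq_zero := by
    rintro (i | j)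
    exacts [hA.diag_eq_zero i, hW.diag_eq_zero j]
  nonneg := by
    rintro (i | i) (j | j)
    exacts [hA.nonneg i j, mul_nonneg (hv i) (hd j), mul_nonneg (hd i) (hv j), hW.nonneg i j]

lemma couple_mulVec_elim [Fintype U] [Fintype V] (y : U → ℝ) (z : V → ℝ) :
    couple A v d W *ᵥ Sum.elim y z =
      Sum.elim (A *ᵥ y + (d ⬝ᵥ z) • v) (W *ᵥ z + (v ⬝ᵥ y) • d) := by
  simp [couple, fromBlocks_mulVec, vecMulVec_mulVec, add_comm]

lemma smul_sumElim_zero (c : ℝ) (g : U → ℝ) :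
    c • Sum.elim g (0 : V → ℝ) = Sum.elim (c • g) 0 := by
  ext (i | j) <;> simp

end Weights

section Flip

variable {U V : Type*} [Fintype U] [Fintype V]

/-- A single agent with opinion `±1/2` negates it, against the sign of the field exerted by her
neighbours and by an external field `h`. -/
def flipRel (W : Matrix V V ℝ) (h : V → ℝ) : SetRel (V → ℝ) (V → ℝ) :=
  {(x, x') | ∃ i, |x i| = 1 / 2 ∧ x i * ((W *ᵥ x) i + h i) < 0 ∧
    x' i = -x i ∧ ∀ j ≠ i, x' j = x j}

variable {A : Matrix U U ℝ} {v g y y' : U → ℝ} {d h z z' : V → ℝ} {W : Matrix V V ℝ}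

lemma flipRel_submatrix (e : U ≃ V) (hz : z ~[flipRel W h] z') :
    (z ∘ e) ~[flipRel (W.submatrix e e) (h ∘ e)] (z' ∘ e) := by
  obtain ⟨i, habs, hneg, hflip, hrest⟩ := hz
  refine ⟨e.symm i, by simpa using habs, ?_, by simpa,
    fun j hj => hrest _ (by rwa [ne_eq, ← e.eq_symm_apply])⟩
  simpa [submatrix_mulVec_equiv, Function.comp_assoc] using hneg

lemma flipRel_couple_left (hy : y ~[flipRel A (g + (d ⬝ᵥ z) • v)] y') :
    Sum.elim y z ~[flipRel (couple A v d W) (Sum.elim g h)] Sum.elim y' z := by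
  obtain ⟨i, habs, hneg, hflip, hrest⟩ := hy
  refine ⟨.inl i, habs, ?_, hflip, ?_⟩
  · simpa [couple_mulVec_elim, add_assoc, add_left_comm, add_comm] using hneg
  · rintro (j | j) hj
    exacts [hrest j (by simpa using hj), rfl]

lemma flipRel_couple_right (hz : z ~[flipRel W (h + (v ⬝ᵥ y) • d)] z') :
    Sum.elim y z ~[flipRel (couple A v d W) (Sum.elim g h)] Sum.elim y z' := by
  obtain ⟨i, habs, hneg, hflip, hrest⟩ := hz
  refine ⟨.inr i, habs, ?_, hflip, ?_⟩
  · simpa [couple_mulVec_elim, add_assoc, add_left_comm, add_comm] using hneg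
  · rintro (j | j) hj
    exacts [rfl, hrest j (by simpa using hj)]

end Flip

section Cost

lemma inGrid_half_of_abs_eq {c : ℝ} (hc : |c| = 1 / 2) : inGrid (1 / 2) c := by
  refine ⟨by rw [hc]; norm_num, ?_⟩
  rcases (abs_eq (by norm_num)).1 hc with rfl | rfl
  exacts [⟨1, by norm_num⟩, ⟨-1, by norm_num⟩]

lemma sRec_eq_zero_of_abs_le {c : ℝ} (hc : |c| ≤ 1 / 2) : sRec c = 0 := by
  obtain ⟨hl, hr⟩ := abs_le.1 hc
  rw [sRec, if_neg hl.not_gt, if_neg hr.not_gt]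

variable {N : ℕ} {w : Matrix (Fin N) (Fin N) ℝ} {x x' : Fin N → ℝ}

lemma cost_neg (b : ℝ) {i : Fin N} (hi : |x i| ≤ 1 / 2) :
    cost b w i (-x i) x = cost b w i (x i) x + 4 * (x i * (w *ᵥ x) i) := by
  simp only [cost, sRec_eq_zero_of_abs_le hi, mulVec, dotProduct, sub_zero, neg_sq, add_assoc,
    Finset.mul_sum, ← Finset.sum_add_distrib]
  congr! 2
  ring

lemma imprStep_of_flipRel (b : ℝ) (hx : x ~[flipRel w 0] x') : ImprStep (1 / 2) b w x x' := by
  obtain ⟨i, habs, hneg, hflip, hrest⟩ := hx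
  refine ⟨i, -x i, inGrid_half_of_abs_eq (by rwa [abs_neg]), ?_,
    Function.eq_update_iff.2 ⟨hflip, hrest⟩⟩
  rw [cost_neg b habs.le]
  simp only [Pi.zero_apply, add_zero] at hneg
  linarith

end Cost

section Level

/-- The internal weights of a level, scaled by `D`. Agent `0` receives the input, agent `1` is a
memory, agent `2` a trigger, and agent `3` never moves. -/
def levelWeight (D : ℝ) : Matrix (Fin 4) (Fin 4) ℝ :=
  D • !![0, 3, 0, 0; 3, 0, 2, 0; 0, 2, 0, 0; 0, 0, 0, 0]

/-- The coupling of a level to the next one. Since agent `3` stays at `-1/2`, the next level is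
driven up exactly when agents `0` and `2` are both at `1/2`. -/
def levelCoupling : Fin 4 → ℝ := ![1, 0, 1, 1]

/-- The coupling of a level to the previous one. The factor `5` exceeds the influence on agent `0`
of the memory, which is `3`, and of the next level, which is at most `1`. -/
def levelInput (D : ℝ) : Fin 4 → ℝ := ![5 * D, 0, 0, 0]

/-- The opinions of a level whose input agent, memory and trigger are at `a`, `m` and `t`. -/
noncomputable def levelState (a m t : ℝ) : Fin 4 → ℝ := ![a, m, t, -(1 / 2)]

variable {D s a m t c : ℝ}

lemma isWeight_levelWeight (hD : 0 ≤ D) : IsWeight (levelWeight D) where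
  isSymm := by
    ext i j
    fin_cases i <;> fin_cases j <;> simp [levelWeight]
  diag_eq_zero i := by fin_cases i <;> simp [levelWeight]
  nonneg i j := by fin_cases i <;> fin_cases j <;> simp [levelWeight, hD]

lemma levelCoupling_nonneg : 0 ≤ levelCoupling := by
  intro i
  fin_cases i <;> simp [levelCoupling]

lemma levelInput_nonneg (hD : 0 ≤ D) : 0 ≤ levelInput D := by
  intro i
  fin_cases i <;> simp [levelInput, hD]

lemma levelCoupling_dotProduct_levelState :
    levelCoupling ⬝ᵥ levelState a m t = a + t - 1 / 2 := by
  rw [dotProduct, Fin.sum_univ_four]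
  change 1 * a + 0 * m + 1 * t + 1 * (-(1 / 2)) = a + t - 1 / 2
  ring

lemma levelInput_dotProduct_levelState : levelInput D ⬝ᵥ levelState a m t = 5 * D * a := by
  simp [levelInput, levelState, dotProduct, Fin.sum_univ_four]

lemma abs_levelState (ha : |a| = 1 / 2) (hm : |m| = 1 / 2) (ht : |t| = 1 / 2) (i : Fin 4) :
    |levelState a m t i| = 1 / 2 := by
  fin_cases i
  exacts [ha, hm, ht, by norm_num [levelState]]

lemma flipRel_level_input (hD : 0 < D) (hs : |s| ≤ D / 2) (hc : |c| = 1 / 2) (hm : |m| = 1 / 2) :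
    levelState (-c) m t ~[flipRel (levelWeight D) (c • levelInput D + s • levelCoupling)]
      levelState c m t := by
  obtain ⟨hsl, hsr⟩ := abs_le.1 hs
  have hfield : -c * (D * 3 * m + c * (5 * D) + s) < 0 := by
    rcases (abs_eq (by norm_num)).1 hc with rfl | rfl <;>
      rcases (abs_eq (by norm_num)).1 hm with rfl | rfl <;> linarith
  refine ⟨0, by simpa [levelState] using hc, ?_, by simp [levelState], fun j hj => ?_⟩
  · simpa [levelState, levelWeight, levelInput, levelCoupling, mulVec, dotProduct,
      Fin.sum_univ_four, add_assoc] using hfield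
  · fin_cases j <;> simp_all [levelState]

lemma flipRel_level_memory (hD : 0 < D) (hc : |c| = 1 / 2) :
    levelState c (-c) (-c) ~[flipRel (levelWeight D) (a • levelInput D + s • levelCoupling)]
      levelState c c (-c) := by
  have hfield : -c * (D * 3 * c + D * 2 * -c) < 0 := by
    rcases (abs_eq (by norm_num)).1 hc with rfl | rfl <;> linarith
  refine ⟨1, by simpa [levelState] using hc, ?_, by simp [levelState], fun j hj => ?_⟩
  · simpa [levelState, levelWeight, levelInput, levelCoupling, mulVec, dotProduct,
      Fin.sum_univ_four, add_assoc] using hfield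
  · fin_cases j <;> simp_all [levelState]

lemma flipRel_level_trigger (hD : 0 < D) (hs : |s| ≤ D / 2) (hm : |m| = 1 / 2) :
    levelState a m (-m) ~[flipRel (levelWeight D) (c • levelInput D + s • levelCoupling)]
      levelState a m m := by
  obtain ⟨hsl, hsr⟩ := abs_le.1 hs
  have hfield : -m * (D * 2 * m + s) < 0 := by
    rcases (abs_eq (by norm_num)).1 hm with rfl | rfl <;> linarith
  refine ⟨2, by simpa [levelState] using hm, ?_, by simp [levelState], fun j hj => ?_⟩
  · simpa [levelState, levelWeight, levelInput, levelCoupling, mulVec, dotProduct,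
      Fin.sum_univ_four, add_assoc] using hfield
  · fin_cases j <;> simp_all [levelState]

end Level

/-- A network that can be switched on and off through an external field proportional to `input`,
taking `T` flips in either direction. The bound `D / 2` limits how strongly the network acts back
on whatever drives it while it is in the state `on` or `off`. -/
structure Switch (V : Type*) [Fintype V] (D : ℝ) (T : ℕ) where
  weight : Matrix V V ℝ
  input : V → ℝ
  off : V → ℝ
  on : V → ℝ
  isWeight : IsWeight weight
  input_nonneg : 0 ≤ input
  abs_off (i : V) : |off i| = 1 / 2
  abs_input_off_le : |input ⬝ᵥ off| ≤ D / 2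
  abs_input_on_le : |input ⬝ᵥ on| ≤ D / 2
  rise : ReachesIn (flipRel weight ((1 / 2 : ℝ) • input)) T off on
  fall : ReachesIn (flipRel weight ((-(1 / 2) : ℝ) • input)) T on off

namespace Switch

variable {U V : Type*} [Fintype U] [Fintype V] {D : ℝ} {T : ℕ}

/-- The switch of idle agents, which is on and off at the same time. -/
noncomputable def idle (V : Type*) [Fintype V] : Switch V 1 0 where
  weight := 0
  input := 0
  off _ := 1 / 2
  on _ := 1 / 2
  isWeight := isWeight_zero
  input_nonneg := le_rfl
  abs_off _ := by norm_num
  abs_input_off_le := by simp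
  abs_input_on_le := by simp
  rise := .refl _ _
  fall := .refl _ _

variable (S : Switch V D T) {A : Matrix U U ℝ} {v g y y₀ y₁ y₂ y₃ : U → ℝ}

lemma couple_rise (hv : v ⬝ᵥ y = 1 / 2) :
    ReachesIn (flipRel (couple A v S.input S.weight) (Sum.elim g 0)) T
      (Sum.elim y S.off) (Sum.elim y S.on) :=
  S.rise.map (Sum.elim y) fun _ _ hz => flipRel_couple_right (by rwa [hv, zero_add])

lemma couple_fall (hv : v ⬝ᵥ y = -(1 / 2)) :
    ReachesIn (flipRel (couple A v S.input S.weight) (Sum.elim g 0)) T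
      (Sum.elim y S.on) (Sum.elim y S.off) :=
  S.fall.map (Sum.elim y) fun _ _ hz => flipRel_couple_right (by rwa [hv, zero_add])

lemma couple_cycle (h₁ : y₀ ~[flipRel A (g + (S.input ⬝ᵥ S.off) • v)] y₁) (hv₁ : v ⬝ᵥ y₁ = 1 / 2)
    (h₂ : y₁ ~[flipRel A (g + (S.input ⬝ᵥ S.on) • v)] y₂) (hv₂ : v ⬝ᵥ y₂ = -(1 / 2))
    (h₃ : y₂ ~[flipRel A (g + (S.input ⬝ᵥ S.off) • v)] y₃) :
    ReachesIn (flipRel (couple A v S.input S.weight) (Sum.elim g 0)) (2 * T + 3)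
      (Sum.elim y₀ S.off) (Sum.elim y₃ S.off) := by
  convert ((((ReachesIn.single (flipRel_couple_left h₁)).trans (S.couple_rise hv₁)).trans
    (.single (flipRel_couple_left h₂))).trans (S.couple_fall hv₂)).trans
    (.single (flipRel_couple_left h₃)) using 1
  ring

/-- The switch obtained by putting one more level in front of `S`: driving the new level in either
direction drives `S` once up and once down. -/
noncomputable def addLevel (hD : 0 < D) : Switch (Fin 4 ⊕ V) (5 * D) (2 * T + 3) where
  weight := couple (levelWeight D) levelCoupling S.input S.weight
  input := Sum.elim (levelInput D) 0
  off := Sum.elim (levelState (-(1 / 2)) (-(1 / 2)) (1 / 2)) S.off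
  on := Sum.elim (levelState (1 / 2) (1 / 2) (-(1 / 2))) S.off
  isWeight := (isWeight_levelWeight hD.le).couple levelCoupling_nonneg S.input_nonneg S.isWeight
  input_nonneg := by
    rintro (i | j)
    exacts [levelInput_nonneg hD.le i, le_rfl]
  abs_off := by
    rintro (i | j)
    exacts [abs_levelState (by norm_num) (by norm_num) (by norm_num) i, S.abs_off j]
  abs_input_off_le := by
    rw [sumElim_dotProduct_sumElim, levelInput_dotProduct_levelState, zero_dotProduct, abs_le]
    constructor <;> linarith
  abs_input_on_le := by
    rw [sumElim_dotProduct_sumElim, levelInput_dotProduct_levelState, zero_dotProduct, abs_le]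
    constructor <;> linarith
  rise := by
    have hhalf : |(1 / 2 : ℝ)| = 1 / 2 := by norm_num
    have hneg : |(-(1 / 2) : ℝ)| = 1 / 2 := by norm_num
    have hinput := flipRel_level_input (t := 1 / 2) hD S.abs_input_off_le hhalf hneg
    have htrigger := flipRel_level_trigger (a := 1 / 2) (c := 1 / 2) hD S.abs_input_on_le hneg
    have hmemory := flipRel_level_memory (a := 1 / 2) (s := S.input ⬝ᵥ S.off) hD hhalf
    rw [neg_neg] at htrigger
    rw [smul_sumElim_zero]
    refine S.couple_cycle hinput ?_ htrigger ?_ hmemory <;>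
      rw [levelCoupling_dotProduct_levelState] <;> norm_num
  fall := by
    have hhalf : |(1 / 2 : ℝ)| = 1 / 2 := by norm_num
    have hneg : |(-(1 / 2) : ℝ)| = 1 / 2 := by norm_num
    have htrigger := flipRel_level_trigger (a := 1 / 2) (c := -(1 / 2)) hD S.abs_input_off_le hhalf
    have hinput := flipRel_level_input (t := 1 / 2) hD S.abs_input_on_le hneg hhalf
    have hmemory := flipRel_level_memory (a := -(1 / 2)) (s := S.input ⬝ᵥ S.off) hD hneg
    rw [neg_neg] at hinput hmemory
    rw [smul_sumElim_zero]
    refine S.couple_cycle htrigger ?_ hinput ?_ hmemory <;>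
      rw [levelCoupling_dotProduct_levelState] <;> norm_num

end Switch

lemma exists_switch (n k : ℕ) :
    ∃ (V : Type) (_ : Fintype V), Fintype.card V = 4 * n + k ∧
      Nonempty (Switch V (5 ^ n) (3 * (2 ^ n - 1))) := by
  induction n with
  | zero => exact ⟨Fin k, inferInstance, by simp, ⟨by simpa using Switch.idle (Fin k)⟩⟩
  | succ n ih =>
    obtain ⟨V, _, hcard, ⟨S⟩⟩ := ih
    have hlength : 2 * (3 * (2 ^ n - 1)) + 3 = 3 * (2 ^ (n + 1) - 1) := by
      have hpow := Nat.one_le_two_pow (n := n)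
      rw [pow_succ]
      omega
    refine ⟨Fin 4 ⊕ V, inferInstance, by rw [Fintype.card_sum, Fintype.card_fin, hcard]; ring, ⟨?_⟩⟩
    rw [pow_succ', ← hlength]
    exact S.addLevel (by positivity)


lemma two_pow_pred_le {n : ℕ} (hn : 1 ≤ n) : 2 ^ (n - 1) ≤ 3 * (2 ^ n - 1) := by
  have hdouble := Nat.two_pow_pred_add_two_pow_pred hn
  omega

end OpinionGame

open OpinionGame Matrix in
theorem exponential_improvement_sequence_general (n N : ℕ) (hN : 4 * n + 1 ≤ N) :
    ∃ (w : Fin N → Fin N → ℝ) (seq : ℕ → Fin N → ℝ),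
      (∀ i j, w i j = w j i) ∧ (∀ i, w i i = 0) ∧ (∀ i j, 0 ≤ w i j) ∧
      (∀ i, inGrid (1 / 2) (seq 0 i)) ∧
      ∀ b t, t < 3 * (2 ^ n - 1) → ImprStep (1 / 2) b w (seq t) (seq (t + 1)) := by
  obtain ⟨V, _, hcard, ⟨S⟩⟩ := exists_switch n (N - (4 * n + 1))
  have e : Fin N ≃ Unit ⊕ V := Fintype.equivOfCardEq (by
    rw [Fintype.card_fin, Fintype.card_sum, Fintype.card_unit, hcard]
    omega)
  let driver : Unit → ℝ := fun _ => 1 / 2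
  let W := couple (0 : Matrix Unit Unit ℝ) 1 S.input S.weight
  have hW : IsWeight (W.submatrix e e) :=
    (isWeight_zero.couple zero_le_one S.input_nonneg S.isWeight).submatrix e
  have hrise : ReachesIn (flipRel W 0) (3 * (2 ^ n - 1))
      (Sum.elim driver S.off) (Sum.elim driver S.on) := by
    simpa using S.couple_rise (A := 0) (v := 1) (g := 0) (y := driver)
      (by simp [driver, dotProduct])
  obtain ⟨f, hf₀, hf⟩ := hrise.exists_seq
  refine ⟨W.submatrix e e, fun t => f t ∘ e, fun i j => hW.isSymm.apply j i, hW.diag_eq_zero,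
    hW.nonneg, fun i => inGrid_half_of_abs_eq ?_,
    fun b t ht => imprStep_of_flipRel b (flipRel_submatrix e (hf t ht))⟩
  rcases h : e i with i' | j
  · simp [hf₀, h, driver]
  · simp [hf₀, h, S.abs_off j]

/-- Exponential-time instances: for every n ≥ 1 there is an opinion game on
6n+1 agents with discretization factor δ = 1/2 admitting a sequence of at least
2^(n-1) asynchronous improvement steps. -/
theorem exponential_improvement_sequence :
    ∀ n : ℕ, 1 ≤ n →
      ∃ (w : Fin (6 * n + 1) → Fin (6 * n + 1) → ℝ) (b : ℝ) (T : ℕ)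
        (seq : ℕ → (Fin (6 * n + 1) → ℝ)),
        (∀ i j, w i j = w j i) ∧ (∀ i, w i i = 0) ∧ (∀ i j, 0 ≤ w i j) ∧
        0 < b ∧ 2 ^ (n - 1) ≤ T ∧
        (∀ i, inGrid (1/2) (seq 0 i)) ∧
        (∀ t, t < T → ImprStep (1/2) b w (seq t) (seq (t + 1))) := by
  intro n hn
  obtain ⟨w, seq, hsymm, hdiag, hnonneg, hgrid, hstep⟩ :=
    exponential_improvement_sequence_general n (6 * n + 1) (by omega)
  exact ⟨w, 1, _, seq, hsymm, hdiag, hnonneg, one_pos,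
    OpinionGame.two_pow_pred_le hn, hgrid, hstep 1⟩
end
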